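/- arXiv:1203.6313 — 3 statements merged into one kernel-verified Lean document; each statement's English description precedes it below -/
import Mathlib

section
/- Let K be any subfield of ℂ. Then the fixed field of the group Aut(ℂ/K) of field automorphisms of ℂ that fix K pointwise is exactly K: if z ∈ ℂ satisfies η(z) = z for every field automorphism η of ℂ with η|_K = id, then z ∈ K. -/
/-!
Let `E` be an algebraically closed extension of a field `F`. Since `E` is an algebraic closure of
the polynomial ring on any transcendence basis, automorphisms of that polynomial ring extend to `E`.
Translating the variables of a basis through `z` moves every `z` transcendental over `F`. Acting on
the coefficients instead shows that automorphisms of the algebraic closure of `F` in `E` extend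
to `E`, so `Aut(E/F)` permutes transitively the conjugates of an algebraic `z`. Hence `z` is fixed
only if it is its own sole conjugate, that is, purely inseparable over `F`; when `F` is perfect, for
instance of characteristic zero, this means that `z` lies in `F`.
-/

open IntermediateField MvPolynomial

section MvPolynomial

variable {ι R : Type*} [CommRing R]

/-- Translation of the variables by the vector `c`, as an automorphism of the polynomial ring. It is
the source of automorphisms that move transcendental elements. -/
noncomputable def translateEquiv (c : ι → R) : MvPolynomial ι R ≃ₐ[R] MvPolynomial ι R :=
  AlgEquiv.ofAlgHom (aeval fun i ↦ X i + C (c i)) (aeval fun i ↦ X i - C (c i))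
    (by ext i; simp [algHom_C, algebraMap_eq]) (by ext i; simp [algHom_C, algebraMap_eq])

theorem translateEquiv_X (c : ι → R) (i : ι) : translateEquiv c (X i) = X i + C (c i) :=
  aeval_X _ i

theorem translateEquiv_C (c : ι → R) (r : R) : translateEquiv c (C r) = C r :=
  (translateEquiv c).commutes r

end MvPolynomial

theorem exists_ringEquiv_apply_aeval {ι κ R S E E' : Type*} [CommRing R] [CommRing S]
    [Field E] [Field E'] [IsAlgClosed E] [IsAlgClosed E'] [Algebra R E] [Algebra S E']
    {v : ι → E} {w : κ → E'} (hv : IsTranscendenceBasis R v) (hw : IsTranscendenceBasis S w)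
    (σ : MvPolynomial ι R ≃+* MvPolynomial κ S) :
    ∃ η : E ≃+* E', ∀ p, η (aeval v p) = aeval w (σ p) := by
  have := IsAlgClosed.isAlgClosure_of_transcendence_basis v hv
  have := IsAlgClosed.isAlgClosure_of_transcendence_basis w hw
  let τ : Algebra.adjoin R (Set.range v) ≃+* Algebra.adjoin S (Set.range w) :=
    (hv.1.aevalEquiv.symm.toRingEquiv.trans σ).trans hw.1.aevalEquiv.toRingEquiv
  have hτ (p : MvPolynomial ι R) : τ (hv.1.aevalEquiv p) = hw.1.aevalEquiv (σ p) := by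
    simp [τ]
  refine ⟨IsAlgClosure.equivOfEquiv E E' τ, fun p ↦ ?_⟩
  rw [← hv.1.algebraMap_aevalEquiv, IsAlgClosure.equivOfEquiv_algebraMap, hτ,
    hw.1.algebraMap_aevalEquiv]

theorem exists_algEquiv_apply_eq_add_algebraMap {R E : Type*} [CommRing R] [Field E]
    [IsAlgClosed E] [Algebra R E] {z : E} (hz : Transcendental R z) (c : R) :
    ∃ η : E ≃ₐ[R] E, η z = z + algebraMap R E c := by
  obtain ⟨s, hzs, hs⟩ := exists_isTranscendenceBasis_superset
    ((algebraicIndependent_singleton_iff (⟨z, rfl⟩ : ({z} : Set E))).2 hz)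
  let i : s := ⟨z, hzs rfl⟩
  obtain ⟨η, hη⟩ :=
    exists_ringEquiv_apply_aeval hs hs (translateEquiv fun _ ↦ c).toRingEquiv
  refine ⟨AlgEquiv.ofRingEquiv (f := η) fun r ↦ ?_, ?_⟩
  · simpa [translateEquiv_C] using hη (C r)
  · simpa [translateEquiv_X, i] using hη (X i)

theorem exists_algEquiv_apply_algebraMap {F L E : Type*} [CommRing F] [Field L] [Field E]
    [Algebra F L] [Algebra F E] [Algebra L E] [IsScalarTower F L E] [IsAlgClosed E]
    (τ : L ≃ₐ[F] L) :
    ∃ η : E ≃ₐ[F] E, ∀ x, η (algebraMap L E x) = algebraMap L E (τ x) := by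
  obtain ⟨s, hs⟩ := exists_isTranscendenceBasis L E
  obtain ⟨η, hη⟩ := exists_ringEquiv_apply_aeval hs hs (mapEquiv s τ.toRingEquiv)
  have hηL (x : L) : η (algebraMap L E x) = algebraMap L E (τ x) := by simpa using hη (C x)
  refine ⟨AlgEquiv.ofRingEquiv (f := η) fun r ↦ ?_, hηL⟩
  rw [IsScalarTower.algebraMap_apply F L E, hηL, τ.commutes]

section FixedField

variable {F E : Type*} [Field F] [Field E] [Algebra F E]

theorem exists_algEquiv_apply_eq_of_isConjRoot [IsAlgClosed E] {x y : E} (hx : IsIntegral F x)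
    (h : IsConjRoot F x y) : ∃ η : Gal(E/F), η x = y := by
  let x' : algebraicClosure F E := ⟨x, mem_algebraicClosure_iff'.2 hx⟩
  let y' : algebraicClosure F E := ⟨y, mem_algebraicClosure_iff'.2 (h.isIntegral hx)⟩
  have h' : IsConjRoot F y' x' := (isConjRoot_algHom_iff (algebraicClosure F E).val).1 h.symm
  have : Normal F (algebraicClosure F E) := IsAlgClosure.normal F _
  obtain ⟨τ, hτ⟩ := h'.exists_algEquiv
  obtain ⟨η, hη⟩ := exists_algEquiv_apply_algebraMap (E := E) τ
  exact ⟨η, (hη x').trans (congrArg Subtype.val hτ)⟩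

theorem mem_perfectClosure_of_forall_isConjRoot_eq [IsAlgClosed E] {x : E} (hx : IsIntegral F x)
    (h : ∀ y, IsConjRoot F x y → y = x) : x ∈ perfectClosure F E := by
  classical
  rw [mem_perfectClosure_iff_natSepDegree_eq_one, Polynomial.natSepDegree_eq_of_isAlgClosed E,
    Finset.card_eq_one]
  refine ⟨x, Finset.eq_singleton_iff_unique_mem.2 ⟨?_, fun y hy ↦ ?_⟩⟩
  · exact Multiset.mem_toFinset.2 ((isConjRoot_iff_mem_minpoly_aroots hx).1 .refl)
  · exact h y ((isConjRoot_iff_mem_minpoly_aroots hx).2 (Multiset.mem_toFinset.1 hy))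

theorem perfectClosure_le_fixedField (H : Subgroup Gal(E/F)) :
    perfectClosure F E ≤ fixedField H := by
  intro x hx
  obtain ⟨n, a, ha⟩ := mem_perfectClosure_iff.1 hx
  have := expChar_of_injective_algebraMap (algebraMap F E).injective (ringExpChar F)
  refine (mem_fixedField_iff H x).2 fun η _ ↦ iterateFrobenius_inj E (ringExpChar F) n ?_
  rw [iterateFrobenius_def, iterateFrobenius_def, ← map_pow, ← ha, AlgEquiv.commutes]

variable (F E)

theorem stmt4_general [IsAlgClosed E] :
    fixedField (⊤ : Subgroup Gal(E/F)) = perfectClosure F E := by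
  refine le_antisymm (fun z hz ↦ ?_) (perfectClosure_le_fixedField ⊤)
  have hfix (η : Gal(E/F)) : η z = z := (mem_fixedField_iff ⊤ z).1 hz η trivial
  have hint : IsIntegral F z := by
    rw [← isAlgebraic_iff_isIntegral]
    by_contra htrans
    obtain ⟨η, hη⟩ := exists_algEquiv_apply_eq_add_algebraMap htrans 1
    simp [hfix η] at hη
  refine mem_perfectClosure_of_forall_isConjRoot_eq hint fun y hy ↦ ?_
  obtain ⟨η, rfl⟩ := exists_algEquiv_apply_eq_of_isConjRoot hint hy
  exact hfix η

theorem fixedField_top_eq_bot [PerfectField F] [IsAlgClosed E] :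
    fixedField (⊤ : Subgroup Gal(E/F)) = ⊥ :=
  (stmt4_general F E).trans (eq_bot_of_isPurelyInseparable_of_isSeparable _)

end FixedField

/-- Let `K` be any subfield of `ℂ`.  The fixed field of the group of field
automorphisms of `ℂ` fixing `K` pointwise is exactly `K`: if `z ∈ ℂ` satisfies `η z = z` for
every field automorphism `η` of `ℂ` with `η|_K = id`, then `z ∈ K`. -/
theorem stmt4 (K : Subfield ℂ) (z : ℂ)
    (hz : ∀ η : ℂ ≃+* ℂ, (∀ k ∈ K, η k = k) → η z = z) :
    z ∈ K := by
  obtain ⟨k, rfl⟩ := mem_bot.1 <| (fixedField_top_eq_bot K ℂ).le <| (mem_fixedField_iff ⊤ z).2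
    fun η _ ↦ hz η.toRingEquiv fun k hk ↦ η.commutes ⟨k, hk⟩
  exact k.2
end

section
/- Let n ≥ 1 and define Ψ : ℂⁿ × ℂⁿ → ℂ^{3n−1} by Ψ(x,z) = (x₁+z₁, …, xₙ+zₙ, x₁z₁, …, xₙzₙ, x₁x₂+z₁z₂, …, x₁xₙ+z₁zₙ). Then (a) Ψ(z,x) = Ψ(x,z) for all x, z ∈ ℂⁿ; and (b) if (x,z), (x′,z′) ∈ ℂⁿ × ℂⁿ satisfy Ψ(x,z) = Ψ(x′,z′) and x₁ ≠ z₁, then (x,z) = (x′,z′) or (x,z) = (z′,x′). In particular, Ψ is injective on any subset A ⊆ ℂⁿ × ℂⁿ all of whose points (x,z) satisfy x₁ ≠ z₁ and whose image under the swap (x,z) ↦ (z,x) meets A only in points fixed by the swap. -/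
/-- The map `Ψ : ℂⁿ × ℂⁿ → ℂ^{3n−1}` whose coordinates are the invariants
`tᵢ = xᵢ + zᵢ` (`1 ≤ i ≤ n`), `t_{n+i} = xᵢ zᵢ` (`1 ≤ i ≤ n`) and
`t_{2n+k−1} = x₁ x_k + z₁ z_k` (`2 ≤ k ≤ n`) of the swap `(x,z) ↦ (z,x)`. -/
noncomputable def Psi (n : ℕ) [NeZero n] :
    (Fin n → ℂ) × (Fin n → ℂ) →
      (Fin n → ℂ) × (Fin n → ℂ) × ({k : Fin n // k ≠ 0} → ℂ) :=
  fun p =>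
    (fun i => p.1 i + p.2 i,
     fun i => p.1 i * p.2 i,
     fun k => p.1 0 * p.1 k.1 + p.2 0 * p.2 k.1)

/-!
At the base index the sum and the product determine the pair `(x₁, z₁)` up to order, as the roots of
a monic quadratic. Once the order is fixed, `x₁ ≠ z₁` makes `xₖ + zₖ = tₖ`,
`x₁ xₖ + z₁ zₖ = t_{2n+k-1}` a linear system in `(xₖ, zₖ)` with determinant `z₁ - x₁ ≠ 0`, so every
other pair is determined, in the matching order.
-/

section Scalar

variable {R : Type*} [CommRing R]

theorem eq_or_eq_of_add_eq_add_of_mul_eq_mul [NoZeroDivisors R] {a b c d : R}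
    (hadd : a + b = c + d) (hmul : a * b = c * d) : a = c ∨ a = d := by
  have hroot : (a - c) * (a - d) = 0 := by linear_combination a * hadd - hmul
  exact (mul_eq_zero.mp hroot).imp sub_eq_zero.mp sub_eq_zero.mp

theorem eq_and_eq_of_add_eq_add_of_mul_add_mul_eq {a b u v u' v' : R}
    (hreg : IsLeftRegular (a - b)) (hadd : u + v = u' + v')
    (hmul : a * u + b * v = a * u' + b * v') : u = u' ∧ v = v' := by
  have hu : u = u' := hreg (by linear_combination hmul - b * hadd)
  exact ⟨hu, by linear_combination hadd - hu⟩

end Scalar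

theorem injOn_of_eq_or_eq_apply {α β : Type*} {f : α → β} {σ : α → α} {A : Set α}
    (hf : ∀ p ∈ A, ∀ q ∈ A, f p = f q → p = q ∨ p = σ q)
    (hσ : ∀ p ∈ A, σ p ∈ A → σ p = p) : Set.InjOn f A := by
  intro p hp q hq hpq
  obtain h | h := hf p hp q hq hpq
  · exact h
  · exact h.trans (hσ q hq (h ▸ hp))

section Pairs

variable {ι R : Type*} {i₀ : ι}

theorem pair_eq_of_base_eq [CommRing R] {p q : (ι → R) × (ι → R)}
    (hreg : IsLeftRegular (p.1 i₀ - p.2 i₀)) (hbase : p.1 i₀ = q.1 i₀)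
    (hadd : ∀ i, p.1 i + p.2 i = q.1 i + q.2 i)
    (hmix : ∀ k ≠ i₀, p.1 i₀ * p.1 k + p.2 i₀ * p.2 k = q.1 i₀ * q.1 k + q.2 i₀ * q.2 k) :
    p = q := by
  have hbase' : p.2 i₀ = q.2 i₀ := by linear_combination hadd i₀ - hbase
  have hcoord : ∀ i, p.1 i = q.1 i ∧ p.2 i = q.2 i := by
    intro i
    obtain rfl | hi := eq_or_ne i i₀
    · exact ⟨hbase, hbase'⟩
    · refine eq_and_eq_of_add_eq_add_of_mul_add_mul_eq hreg (hadd i) ?_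
      rw [hmix i hi, hbase, hbase']
  exact Prod.ext (funext fun i => (hcoord i).1) (funext fun i => (hcoord i).2)

theorem pair_eq_or_eq_swap [CommRing R] [NoZeroDivisors R] {p q : (ι → R) × (ι → R)}
    (hne : p.1 i₀ ≠ p.2 i₀)
    (hadd : ∀ i, p.1 i + p.2 i = q.1 i + q.2 i)
    (hmul : p.1 i₀ * p.2 i₀ = q.1 i₀ * q.2 i₀)
    (hmix : ∀ k ≠ i₀, p.1 i₀ * p.1 k + p.2 i₀ * p.2 k = q.1 i₀ * q.1 k + q.2 i₀ * q.2 k) :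
    p = q ∨ p = q.swap := by
  have : IsCancelMulZero R := NoZeroDivisors.toIsCancelMulZero
  have hreg : IsLeftRegular (p.1 i₀ - p.2 i₀) := (IsRegular.of_ne_zero (sub_ne_zero.mpr hne)).left
  obtain hbase | hbase := eq_or_eq_of_add_eq_add_of_mul_eq_mul (hadd i₀) hmul
  · exact .inl (pair_eq_of_base_eq hreg hbase hadd hmix)
  · exact .inr (pair_eq_of_base_eq hreg hbase (fun i => (hadd i).trans (add_comm _ _))
      fun k hk => (hmix k hk).trans (add_comm _ _))

/-- The map `Ψ` with coordinates indexed by any type `ι` and entries in any `R`; the index `i₀`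
plays the role of `1` in the mixed invariants `x₁ xₖ + z₁ zₖ`. -/
def swapInvariants [Add R] [Mul R] (i₀ : ι) (p : (ι → R) × (ι → R)) :
    (ι → R) × (ι → R) × ({k : ι // k ≠ i₀} → R) :=
  (fun i => p.1 i + p.2 i, fun i => p.1 i * p.2 i,
    fun k => p.1 i₀ * p.1 k + p.2 i₀ * p.2 k)

theorem swapInvariants_eq_iff [Add R] [Mul R] {p q : (ι → R) × (ι → R)} :
    swapInvariants i₀ p = swapInvariants i₀ q ↔
      (∀ i, p.1 i + p.2 i = q.1 i + q.2 i) ∧ (∀ i, p.1 i * p.2 i = q.1 i * q.2 i) ∧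
        ∀ k ≠ i₀, p.1 i₀ * p.1 k + p.2 i₀ * p.2 k = q.1 i₀ * q.1 k + q.2 i₀ * q.2 k := by
  simp [swapInvariants, funext_iff]

theorem swapInvariants_swap [CommSemiring R] (p : (ι → R) × (ι → R)) :
    swapInvariants i₀ p.swap = swapInvariants i₀ p :=
  swapInvariants_eq_iff.mpr
    ⟨fun _ => add_comm _ _, fun _ => mul_comm _ _, fun _ _ => add_comm _ _⟩

theorem eq_or_eq_swap_of_swapInvariants_eq [CommRing R] [NoZeroDivisors R]
    {p q : (ι → R) × (ι → R)} (h : swapInvariants i₀ p = swapInvariants i₀ q)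
    (hne : p.1 i₀ ≠ p.2 i₀) : p = q ∨ p = q.swap := by
  obtain ⟨hadd, hmul, hmix⟩ := swapInvariants_eq_iff.mp h
  exact pair_eq_or_eq_swap hne hadd (hmul i₀) hmix

end Pairs

theorem stmt10_general {ι R : Type*} [CommRing R] [NoZeroDivisors R] (i₀ : ι) :
    (∀ x z : ι → R, swapInvariants i₀ (z, x) = swapInvariants i₀ (x, z)) ∧
    (∀ x z x' z' : ι → R, swapInvariants i₀ (x, z) = swapInvariants i₀ (x', z') →
        x i₀ ≠ z i₀ → (x, z) = (x', z') ∨ (x, z) = (z', x')) ∧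
    (∀ A : Set ((ι → R) × (ι → R)),
        (∀ p ∈ A, p.1 i₀ ≠ p.2 i₀) →
        (∀ p ∈ A, (p.2, p.1) ∈ A → (p.2, p.1) = p) →
        Set.InjOn (swapInvariants i₀) A) :=
  ⟨fun x z => swapInvariants_swap (x, z),
    fun _ _ _ _ => eq_or_eq_swap_of_swapInvariants_eq,
    fun _ hne hswap => injOn_of_eq_or_eq_apply
      (fun p hp _ _ h => eq_or_eq_swap_of_swapInvariants_eq h (hne p hp)) hswap⟩

/-- For `n ≥ 1` and `Ψ` as above:
(a) `Ψ(z,x) = Ψ(x,z)`;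
(b) if `Ψ(x,z) = Ψ(x′,z′)` and `x₁ ≠ z₁` then `(x,z) = (x′,z′)` or `(x,z) = (z′,x′)`;
in particular, `Ψ` is injective on any subset `A` all of whose points satisfy `x₁ ≠ z₁` and
whose image under the swap meets `A` only in points fixed by the swap. -/
theorem stmt10 (n : ℕ) [NeZero n] :
    (∀ x z : Fin n → ℂ, Psi n (z, x) = Psi n (x, z)) ∧
    (∀ x z x' z' : Fin n → ℂ, Psi n (x, z) = Psi n (x', z') → x 0 ≠ z 0 →
        (x, z) = (x', z') ∨ (x, z) = (z', x')) ∧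
    (∀ A : Set ((Fin n → ℂ) × (Fin n → ℂ)),
        (∀ p ∈ A, p.1 0 ≠ p.2 0) →
        (∀ p ∈ A, (p.2, p.1) ∈ A → (p.2, p.1) = p) →
        Set.InjOn (Psi n) A) :=
  stmt10_general (R := ℂ) (0 : Fin n)
end

section
/- Let X ⊆ ℂ⁴ be defined by 1 + x₁² + x₂² = 0, −1 + x₁² + x₃² = 0, i + x₁² + x₄² = 0, and let Y ⊆ ℂ⁴ be defined by the rational-coefficient equations 4 + w₂² − w₃² = 0, w₁² + w₂w₃ = 0, w₁² + w₄² − 2 = 0. Then the map T(x₁,x₂,x₃,x₄) = ((1+i)x₁, x₂ + i x₃, x₃ + i x₂, (1+i)x₄) sends X into Y, the map S(w₁,w₂,w₃,w₄) = (w₁/(1+i), (w₂ − i w₃)/2, (w₃ − i w₂)/2, w₄/(1+i)) sends Y into X, and S ∘ T = id on ℂ⁴ and T ∘ S = id on ℂ⁴; hence T restricts to a bijection from X onto Y, exhibiting a model of X defined over ℚ. -/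
/-- The curve `X ⊆ ℂ⁴` defined by `1 + x₁² + x₂² = 0`, `−1 + x₁² + x₃² = 0`,
`i + x₁² + x₄² = 0`. -/
def XCurve : Set (ℂ × ℂ × ℂ × ℂ) :=
  {p | 1 + p.1 ^ 2 + p.2.1 ^ 2 = 0 ∧
       -1 + p.1 ^ 2 + p.2.2.1 ^ 2 = 0 ∧
       Complex.I + p.1 ^ 2 + p.2.2.2 ^ 2 = 0}

/-- The rational model `Y ⊆ ℂ⁴` defined by `4 + w₂² − w₃² = 0`, `w₁² + w₂ w₃ = 0`,
`w₁² + w₄² − 2 = 0` (all defining polynomials have coefficients in `ℚ`). -/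
def YCurve : Set (ℂ × ℂ × ℂ × ℂ) :=
  {w | 4 + w.2.1 ^ 2 - w.2.2.1 ^ 2 = 0 ∧
       w.1 ^ 2 + w.2.1 * w.2.2.1 = 0 ∧
       w.1 ^ 2 + w.2.2.2 ^ 2 - 2 = 0}

/-- `T(x₁,x₂,x₃,x₄) = ((1+i)x₁, x₂ + i x₃, x₃ + i x₂, (1+i)x₄)`. -/
noncomputable def TMap : ℂ × ℂ × ℂ × ℂ → ℂ × ℂ × ℂ × ℂ :=
  fun p =>
    ((1 + Complex.I) * p.1, p.2.1 + Complex.I * p.2.2.1,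
     p.2.2.1 + Complex.I * p.2.1, (1 + Complex.I) * p.2.2.2)

/-- `S(w₁,w₂,w₃,w₄) = (w₁/(1+i), (w₂ − i w₃)/2, (w₃ − i w₂)/2, w₄/(1+i))`. -/
noncomputable def SMap : ℂ × ℂ × ℂ × ℂ → ℂ × ℂ × ℂ × ℂ :=
  fun w =>
    (w.1 / (1 + Complex.I), (w.2.1 - Complex.I * w.2.2.1) / 2,
     (w.2.2.1 - Complex.I * w.2.1) / 2, w.2.2.2 / (1 + Complex.I))

/-!
Write `f₁, f₂, f₃` for the equations of `X` and `g₁, g₂, g₃` for those of `Y`. Pulling back along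
the linear map `T` gives `g₁ ∘ T = 2 (f₁ - f₂)`, `g₂ ∘ T = i (f₁ + f₂)` and `g₃ ∘ T = 2 i f₃`.
As `2` and `i` are invertible, the two systems are equivalent, so `X = T⁻¹(Y)`; and `T` is
invertible because `(1 + i) (1 - i) = 2`.
-/

section CommRing

variable {R : Type*} [CommRing R]

/-- The curve `X` over a ring with a chosen square root `i` of `-1`; `XCurve` is the case
`i = Complex.I`. -/
def twistedCurve (i : R) : Set (R × R × R × R) :=
  {p | 1 + p.1 ^ 2 + p.2.1 ^ 2 = 0 ∧ -1 + p.1 ^ 2 + p.2.2.1 ^ 2 = 0 ∧ i + p.1 ^ 2 + p.2.2.2 ^ 2 = 0}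

variable (R) in
/-- The `R`-points of the model `Y`, whose equations do not involve a square root of `-1`;
`YCurve` is the case `R = ℂ`. -/
def rationalModel : Set (R × R × R × R) :=
  {w | 4 + w.2.1 ^ 2 - w.2.2.1 ^ 2 = 0 ∧ w.1 ^ 2 + w.2.1 * w.2.2.1 = 0 ∧
    w.1 ^ 2 + w.2.2.2 ^ 2 - 2 = 0}

/-- The linear change of coordinates `T` carrying `twistedCurve i` to `rationalModel R`; `TMap` is
the case `i = Complex.I`. -/
def toRationalModel (i : R) (p : R × R × R × R) : R × R × R × R :=
  ((1 + i) * p.1, p.2.1 + i * p.2.2.1, p.2.2.1 + i * p.2.1, (1 + i) * p.2.2.2)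

variable {i : R}

lemma one_add_sq_of_sq_eq_neg_one (hi : i ^ 2 = -1) : (1 + i) ^ 2 = 2 * i := by
  linear_combination hi

lemma add_mul_sq_sub_add_mul_sq (hi : i ^ 2 = -1) (x y : R) :
    (x + i * y) ^ 2 - (y + i * x) ^ 2 = 2 * (x ^ 2 - y ^ 2) := by
  linear_combination (y ^ 2 - x ^ 2) * hi

lemma add_mul_mul_add_mul (hi : i ^ 2 = -1) (x y : R) :
    (x + i * y) * (y + i * x) = i * (x ^ 2 + y ^ 2) := by
  linear_combination x * y * hi

lemma add_mul_sub_mul_add_mul (hi : i ^ 2 = -1) (x y : R) :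
    x + i * y - i * (y + i * x) = 2 * x := by
  linear_combination -x * hi

lemma sub_mul_add_mul_sub_mul (hi : i ^ 2 = -1) (x y : R) :
    x - i * y + i * (y - i * x) = 2 * x := by
  linear_combination -x * hi

section NoZeroDivisors

variable [NoZeroDivisors R]

lemma sub_eq_zero_and_add_eq_zero_iff (h2 : (2 : R) ≠ 0) {a b : R} :
    a - b = 0 ∧ a + b = 0 ↔ a = 0 ∧ b = 0 := by
  constructor
  · rintro ⟨hsub, hadd⟩
    have ha : a = 0 := (mul_eq_zero_iff_left h2).1 (by linear_combination hsub + hadd)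
    exact ⟨ha, by rwa [ha, zero_add] at hadd⟩
  · rintro ⟨rfl, rfl⟩
    simp

theorem toRationalModel_mem_iff (hi : i ^ 2 = -1) (h2 : (2 : R) ≠ 0) {p : R × R × R × R} :
    toRationalModel i p ∈ rationalModel R ↔ p ∈ twistedCurve i := by
  obtain ⟨x₁, x₂, x₃, x₄⟩ := p
  have hi0 : i ≠ 0 := by
    rintro rfl
    exact h2 (by linear_combination 2 * hi)
  have pullback₁ : 4 + (x₂ + i * x₃) ^ 2 - (x₃ + i * x₂) ^ 2 =
      2 * ((1 + x₁ ^ 2 + x₂ ^ 2) - (-1 + x₁ ^ 2 + x₃ ^ 2)) := by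
    linear_combination add_mul_sq_sub_add_mul_sq hi x₂ x₃
  have pullback₂ : ((1 + i) * x₁) ^ 2 + (x₂ + i * x₃) * (x₃ + i * x₂) =
      i * ((1 + x₁ ^ 2 + x₂ ^ 2) + (-1 + x₁ ^ 2 + x₃ ^ 2)) := by
    rw [mul_pow, one_add_sq_of_sq_eq_neg_one hi, add_mul_mul_add_mul hi]
    ring
  have pullback₃ : ((1 + i) * x₁) ^ 2 + ((1 + i) * x₄) ^ 2 - 2 =
      2 * i * (i + x₁ ^ 2 + x₄ ^ 2) := by
    rw [mul_pow, mul_pow, one_add_sq_of_sq_eq_neg_one hi]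
    linear_combination -2 * hi
  simp only [toRationalModel, rationalModel, twistedCurve, Set.mem_ofPred_eq, pullback₁, pullback₂,
    pullback₃, mul_eq_zero_iff_left h2, mul_eq_zero_iff_left hi0,
    mul_eq_zero_iff_left (mul_ne_zero h2 hi0)]
  rw [← and_assoc, sub_eq_zero_and_add_eq_zero_iff h2, and_assoc]

end NoZeroDivisors

end CommRing

section Field

variable {K : Type*} [Field K] {i : K}

/-- The inverse `S` of `toRationalModel i`, when `i ^ 2 = -1` and `2 ≠ 0`; `SMap` is the case
`i = Complex.I`. -/
def ofRationalModel (i : K) (w : K × K × K × K) : K × K × K × K :=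
  (w.1 / (1 + i), (w.2.1 - i * w.2.2.1) / 2, (w.2.2.1 - i * w.2.1) / 2, w.2.2.2 / (1 + i))

lemma one_add_ne_zero_of_sq_eq_neg_one (hi : i ^ 2 = -1) (h2 : (2 : K) ≠ 0) : 1 + i ≠ 0 := by
  have hmul : (1 + i) * (1 - i) = 2 := by linear_combination -hi
  exact left_ne_zero_of_mul (hmul ▸ h2)

lemma leftInverse_ofRationalModel (hi : i ^ 2 = -1) (h2 : (2 : K) ≠ 0) :
    Function.LeftInverse (ofRationalModel i) (toRationalModel i) := by
  have h1i := one_add_ne_zero_of_sq_eq_neg_one hi h2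
  intro p
  simp only [ofRationalModel, toRationalModel, add_mul_sub_mul_add_mul hi,
    mul_div_cancel_left₀ _ h1i, mul_div_cancel_left₀ _ h2]

lemma rightInverse_ofRationalModel (hi : i ^ 2 = -1) (h2 : (2 : K) ≠ 0) :
    Function.RightInverse (ofRationalModel i) (toRationalModel i) := by
  have h1i := one_add_ne_zero_of_sq_eq_neg_one hi h2
  intro w
  simp only [ofRationalModel, toRationalModel, mul_div_cancel₀ _ h1i, ← mul_div_assoc, ← add_div,
    sub_mul_add_mul_sub_mul hi, mul_div_cancel_left₀ _ h2]

theorem stmt13_general (hi : i ^ 2 = -1) (h2 : (2 : K) ≠ 0) :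
    (∀ p ∈ twistedCurve i, toRationalModel i p ∈ rationalModel K) ∧
    (∀ w ∈ rationalModel K, ofRationalModel i w ∈ twistedCurve i) ∧
    (∀ p : K × K × K × K, ofRationalModel i (toRationalModel i p) = p) ∧
    (∀ w : K × K × K × K, toRationalModel i (ofRationalModel i w) = w) ∧
    Set.BijOn (toRationalModel i) (twistedCurve i) (rationalModel K) := by
  have left_inv := leftInverse_ofRationalModel hi h2
  have right_inv := rightInverse_ofRationalModel hi h2
  have mapsTo : Set.MapsTo (toRationalModel i) (twistedCurve i) (rationalModel K) :=
    fun _ hp => (toRationalModel_mem_iff hi h2).2 hp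
  have mapsTo_inv : Set.MapsTo (ofRationalModel i) (rationalModel K) (twistedCurve i) :=
    fun w hw => (toRationalModel_mem_iff hi h2).1 ((right_inv w).symm ▸ hw)
  have invOn : Set.InvOn (ofRationalModel i) (toRationalModel i) (twistedCurve i)
      (rationalModel K) := ⟨left_inv.leftInvOn _, right_inv.rightInvOn _⟩
  exact ⟨mapsTo, mapsTo_inv, left_inv, right_inv, invOn.bijOn mapsTo mapsTo_inv⟩

end Field

/-- `T` sends `X` into `Y`, `S` sends `Y` into `X`, and
`S ∘ T = id`, `T ∘ S = id` on `ℂ⁴`; hence `T` restricts to a bijection from `X` onto `Y`,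
exhibiting a model of `X` defined over `ℚ`. -/
theorem stmt13 :
    (∀ p ∈ XCurve, TMap p ∈ YCurve) ∧
    (∀ w ∈ YCurve, SMap w ∈ XCurve) ∧
    (∀ p : ℂ × ℂ × ℂ × ℂ, SMap (TMap p) = p) ∧
    (∀ w : ℂ × ℂ × ℂ × ℂ, TMap (SMap w) = w) ∧
    Set.BijOn TMap XCurve YCurve :=
  stmt13_general Complex.I_sq two_ne_zero
end
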